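/- For all integers n > n′ ≥ 1, the type 𝒯_{n,n′} has consensus number exactly n: there is a wait-free binary consensus algorithm for n processes using objects of type 𝒯_{n,n′} together with registers, and there is no wait-free binary consensus algorithm for n+1 processes using objects of type 𝒯_{n,n′} together with registers. -/

import Mathlib

/-! On a single object `𝒯_{n,n'}` with initial value `s`, the first operation `op_x` fixes the bit
`x` that each of the first `n` operations `op_0`, `op_1` returns, so `n` processes agree by applying
`op_x` for their input `x`.

Conversely, in a critical configuration all `N` processes are poised to access the same object, and
the type of that object is `N`-discerning in the sense of Ruppert: the response a process receives
and the value it leaves behind tell which team moved first. A register is not discerning, since a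
write hides any preceding operation and a read changes nothing. For `N > n`, neither is `𝒯_{n,n'}`:
`op_R` either changes nothing or leads to `s_⊥`, whether or not another operation comes first, and
any `n` operations `op_0`, `op_1` lead to `s_⊥`, so that a process moving after all the others
learns nothing. -/

namespace RecoverableConsensus

/-- A deterministic object type: a set of values, operations and responses together with a
transition function assigning to each (value, operation) pair a unique response and a unique
resulting value. -/
structure DetType : Type 1 where
  Value : Type
  Op : Type
  Resp : Type
  δ : Value → Op → Resp × Value

/-- A type is readable if it has a Read operation that returns (an injective encoding of)
the current value of the object without changing it. -/
def Readable (T : DetType) : Prop :=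
  ∃ (read : T.Op) (ι : T.Value → T.Resp),
    Function.Injective ι ∧ ∀ v, T.δ v read = (ι v, v)

/-- The register type over the value set `V`: the operation `none` is Read (returning the
current value without changing it) and `some v` is Write(v) (changing the value to `v`). -/
def RegisterType (V : Type) : DetType where
  Value := V
  Op := Option V
  Resp := V
  δ := fun u op =>
    match op with
    | none => (u, u)
    | some v => (v, v)

def IsRegister (T : DetType) : Prop := ∃ V : Type, T = RegisterType V

/-- An event is either a step by a process or a crash of a process. -/
inductive Event (n : ℕ) : Type where
  | step : Fin n → Event n
  | crash : Fin n → Event n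
deriving DecidableEq

/-- An algorithm for `n` processes: a collection of shared objects, each with a deterministic
type and an initial value, and for each process a deterministic state machine with an initial
state depending on the process's binary input.  Each state determines the process's next step
(`pending`: an operation applied to a designated object, or `none` for a no-op); the state
reached after a step is determined by the current state and the response received (`next`).
`output i s = some v` means that `s` is an output state of process `i` for the value `v`;
processes in output states take only no-op steps. -/
structure Algorithm (n : ℕ) : Type 1 where
  ObjIdx : Type
  objType : ObjIdx → DetType
  objInit : (o : ObjIdx) → (objType o).Value
  PState : Fin n → Type
  init : (i : Fin n) → Bool → PState i
  pending : (i : Fin n) → PState i → Option ((o : ObjIdx) × (objType o).Op)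
  next : (i : Fin n) → PState i → (o : ObjIdx) → (objType o).Resp → PState i
  output : (i : Fin n) → PState i → Option Bool
  output_noop : ∀ i s, output i s ≠ none → pending i s = none

/-- A configuration assigns a state to each process and a value to each object. -/
structure Config {n : ℕ} (A : Algorithm n) : Type where
  pstate : (i : Fin n) → A.PState i
  oval : (o : A.ObjIdx) → (A.objType o).Value

variable {n : ℕ}

/-- The effect of one event on a configuration.  A crash of `p_i` resets `p_i` to its initial
state (for its input) and leaves all object values unchanged; a step of `p_i` applies its
pending operation (if any) to the designated object, receiving the response determined by the
type's transition function. -/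
noncomputable def applyEvent (A : Algorithm n) (input : Fin n → Bool) (C : Config A) :
    Event n → Config A
  | .crash i => { C with pstate := Function.update C.pstate i (A.init i (input i)) }
  | .step i =>
    letI : DecidableEq A.ObjIdx := Classical.decEq _
    match A.pending i (C.pstate i) with
    | none => C
    | some ⟨o, op⟩ =>
      { pstate := Function.update C.pstate i
          (A.next i (C.pstate i) o ((A.objType o).δ (C.oval o) op).1),
        oval := Function.update C.oval o ((A.objType o).δ (C.oval o) op).2 }

/-- Since the algorithm is deterministic, a finite execution from `C` is determined by its
schedule, i.e. its list of events; `run A input C σ` is the configuration `Cσ` reached by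
applying the events of `σ` in order from `C`. -/
noncomputable def run (A : Algorithm n) (input : Fin n → Bool) (C : Config A) :
    List (Event n) → Config A
  | [] => C
  | e :: σ => run A input (applyEvent A input C e) σ

/-- The initial configuration: every process in its initial state, every object at its
initial value. -/
def initConfig (A : Algorithm n) (input : Fin n → Bool) : Config A :=
  ⟨fun i => A.init i (input i), A.objInit⟩

/-- Process `i` has decided `v` in `Cσ`: at some point along the execution `σ` from `C`,
process `i` was in an output state for `v`. -/
def HasDecided (A : Algorithm n) (input : Fin n → Bool) (C : Config A)
    (σ : List (Event n)) (i : Fin n) (v : Bool) : Prop :=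
  ∃ τ, τ <+: σ ∧ A.output i ((run A input C τ).pstate i) = some v

def CrashFree (σ : List (Event n)) : Prop := ∀ i : Fin n, Event.crash i ∉ σ

/-- The first `k` events of an infinite execution. -/
def initSeg (e : ℕ → Event n) (k : ℕ) : List (Event n) := (List.range k).map e

/-- Agreement: in every execution no two processes decide different values. -/
def Agreement (A : Algorithm n) : Prop :=
  ∀ (input : Fin n → Bool) (σ : List (Event n)) (i j : Fin n) (v w : Bool),
    HasDecided A input (initConfig A input) σ i v →
    HasDecided A input (initConfig A input) σ j w → v = w

/-- Validity: every decided value is the input of some process. -/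
def Validity (A : Algorithm n) : Prop :=
  ∀ (input : Fin n → Bool) (σ : List (Event n)) (i : Fin n) (v : Bool),
    HasDecided A input (initConfig A input) σ i v → ∃ j, input j = v

/-- Recoverable wait-freedom: every process, starting from its initial state, either crashes
or decides within a finite number of its own steps.  Equivalently: in every infinite execution
in which process `i` starts at (or is reset by a crash to) its initial state, takes infinitely
many steps and crashes only finitely often, it eventually reaches an output state. -/
def RecWaitFree (A : Algorithm n) : Prop :=
  ∀ (input : Fin n → Bool) (C : Config A) (e : ℕ → Event n) (i : Fin n),
    (C.pstate i = A.init i (input i) ∨ ∃ k, e k = Event.crash i) →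
    (∀ m, ∃ k, m ≤ k ∧ e k = Event.step i) →
    (∃ m, ∀ k, m ≤ k → e k ≠ Event.crash i) →
    ∃ (k : ℕ) (v : Bool), A.output i ((run A input C (initSeg e k)).pstate i) = some v

/-- A recoverable wait-free binary consensus algorithm. -/
def SolvesRecConsensus (A : Algorithm n) : Prop :=
  Agreement A ∧ Validity A ∧ RecWaitFree A

/-- Agreement restricted to crash-free executions. -/
def AgreementCF (A : Algorithm n) : Prop :=
  ∀ (input : Fin n → Bool) (σ : List (Event n)), CrashFree σ →
    ∀ (i j : Fin n) (v w : Bool),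
      HasDecided A input (initConfig A input) σ i v →
      HasDecided A input (initConfig A input) σ j w → v = w

/-- Validity restricted to crash-free executions. -/
def ValidityCF (A : Algorithm n) : Prop :=
  ∀ (input : Fin n → Bool) (σ : List (Event n)), CrashFree σ →
    ∀ (i : Fin n) (v : Bool),
      HasDecided A input (initConfig A input) σ i v → ∃ j, input j = v

/-- Wait-freedom: in crash-free executions, every process that takes infinitely many steps
decides. -/
def WaitFree (A : Algorithm n) : Prop :=
  ∀ (input : Fin n → Bool) (e : ℕ → Event n),
    (∀ (k : ℕ) (i : Fin n), e k ≠ Event.crash i) →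
    ∀ i : Fin n, (∀ m, ∃ k, m ≤ k ∧ e k = Event.step i) →
    ∃ (k : ℕ) (v : Bool),
      A.output i ((run A input (initConfig A input) (initSeg e k)).pstate i) = some v

/-- A wait-free binary consensus algorithm (for the model in which crashes are permanent,
i.e. only crash-free executions are relevant). -/
def SolvesWFConsensus (A : Algorithm n) : Prop :=
  AgreementCF A ∧ ValidityCF A ∧ WaitFree A

/-- The number of crashes of process `i` in `σ`. -/
def crashCount (i : Fin n) (σ : List (Event n)) : ℕ :=
  (σ.filter fun e => decide (e = Event.crash i)).length

def isStepBelow (i : Fin n) : Event n → Bool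
  | .step j => decide (j < i)
  | .crash _ => false

/-- The total number of steps taken by processes `p_0, …, p_{i-1}` in `σ`. -/
def stepsBelow (i : Fin n) (σ : List (Event n)) : ℕ := (σ.filter (isStepBelow i)).length

/-- The crash bound: for every process `p_i`, the number of crashes of `p_i` is at most
`z·n` times the total number of steps of `p_0, …, p_{i-1}` (for `i = 0` this says that `p_0`
never crashes). -/
def EMem (z : ℕ) (σ : List (Event n)) : Prop :=
  ∀ i : Fin n, crashCount i σ ≤ z * n * stepsBelow i σ

/-- `𝓔_z`: executions satisfying the crash bound. -/
def ESet (n z : ℕ) : Set (List (Event n)) := { σ | EMem z σ }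

/-- `𝓔*_z`: executions satisfying the crash bound in every prefix. -/
def EStarSet (n z : ℕ) : Set (List (Event n)) := { σ | ∀ τ, τ <+: σ → EMem z τ }

/-- `e` is an event by a process in `P`. -/
def eventBy (P : Set (Fin n)) : Event n → Prop
  | .step i => i ∈ P
  | .crash i => i ∈ P

/-- The set of processes `P` is `v`-univalent in the execution `α` from `C` with respect to
the set of executions `𝒜`. -/
def VUnivalentIn (A : Algorithm n) (input : Fin n → Bool) (C : Config A)
    (𝒜 : Set (List (Event n))) (P : Set (Fin n)) (α : List (Event n)) (v : Bool) : Prop :=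
  α ∈ 𝒜 ∧ ∀ β : List (Event n), (∀ e ∈ β, eventBy P e) → (α ++ β) ∈ 𝒜 →
    ∀ (i : Fin n) (w : Bool), HasDecided A input C (α ++ β) i w → w = v

/-- The set of processes `P` is bivalent in the execution `α` from `C` with respect to `𝒜`. -/
def BivalentIn (A : Algorithm n) (input : Fin n → Bool) (C : Config A)
    (𝒜 : Set (List (Event n))) (P : Set (Fin n)) (α : List (Event n)) : Prop :=
  ∀ v : Bool, ∃ β : List (Event n), (∀ e ∈ β, eventBy P e) ∧ (α ++ β) ∈ 𝒜 ∧
    ∃ i : Fin n, HasDecided A input C (α ++ β) i v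

/-- `P` is univalent in `α` with respect to `𝒜`: `v`-univalent for some `v`. -/
def UnivalentIn (A : Algorithm n) (input : Fin n → Bool) (C : Config A)
    (𝒜 : Set (List (Event n))) (P : Set (Fin n)) (α : List (Event n)) : Prop :=
  ∃ v : Bool, VUnivalentIn A input C 𝒜 P α v

/-- `α ∈ 𝒜` is critical with respect to `𝒜`: `α` is bivalent with respect to `𝒜` and every
nonempty extension of `α` inside `𝒜` is univalent with respect to `𝒜`. -/
def Critical (A : Algorithm n) (input : Fin n → Bool) (C : Config A)
    (𝒜 : Set (List (Event n))) (α : List (Event n)) : Prop :=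
  α ∈ 𝒜 ∧ BivalentIn A input C 𝒜 Set.univ α ∧
  ∀ β : List (Event n), β ≠ [] → (α ++ β) ∈ 𝒜 → UnivalentIn A input C 𝒜 Set.univ (α ++ β)

/-- Process `i` is on team `v` in `Cα` (with respect to `𝒜`): `α p_i` is `v`-univalent. -/
def OnTeam (A : Algorithm n) (input : Fin n → Bool) (C : Config A)
    (𝒜 : Set (List (Event n))) (α : List (Event n)) (i : Fin n) (v : Bool) : Prop :=
  VUnivalentIn A input C 𝒜 Set.univ (α ++ [Event.step i]) v

/-- Process `i` is poised to apply an operation to object `O` in configuration `C`. -/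
def PoisedAt (A : Algorithm n) (C : Config A) (i : Fin n) (O : A.ObjIdx) : Prop :=
  ∃ op, A.pending i (C.pstate i) = some ⟨O, op⟩

/-- `σ ∈ 𝒮(P)`: a crash-free schedule in which each process of `P` takes at most one step
and no other process takes a step. -/
def IsSched (P : Set (Fin n)) (σ : List (Event n)) : Prop :=
  ∃ l : List (Fin n), l.Nodup ∧ (∀ j ∈ l, j ∈ P) ∧ σ = l.map Event.step

/-- The schedule `λ_k = c_k c_{k+1} ⋯ c_{n-1}`. -/
def lambdaSched (n k : ℕ) : List (Event n) :=
  ((List.finRange n).filter fun j => decide (k ≤ j.val)).map Event.crash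

/-- `U_v`: the set of values of object `O` reachable from `Dα` by a schedule in `𝒮(𝒫)`
whose first process is on team `v`. -/
def USetCfg (A : Algorithm n) (input : Fin n → Bool) (D : Config A)
    (𝒜 : Set (List (Event n))) (α : List (Event n)) (O : A.ObjIdx) (v : Bool) :
    Set (A.objType O).Value :=
  { w | ∃ (j : Fin n) (σ : List (Event n)), OnTeam A input D 𝒜 α j v ∧
        IsSched {k : Fin n | k ≠ j} σ ∧
        w = (run A input D (α ++ Event.step j :: σ)).oval O }

/-- The configuration `Dα` is `v`-hiding. -/
def VHiding (A : Algorithm n) (input : Fin n → Bool) (D : Config A)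
    (𝒜 : Set (List (Event n))) (α : List (Event n)) (O : A.ObjIdx) (v : Bool) : Prop :=
  USetCfg A input D 𝒜 α O false ∩ USetCfg A input D 𝒜 α O true = ∅ ∧
  (run A input D α).oval O ∈ USetCfg A input D 𝒜 α O v

/-- The configuration `Dα` is `n`-recording. -/
def NRecordingCfg (A : Algorithm n) (input : Fin n → Bool) (D : Config A)
    (𝒜 : Set (List (Event n))) (α : List (Event n)) (O : A.ObjIdx) : Prop :=
  USetCfg A input D 𝒜 α O false ∩ USetCfg A input D 𝒜 α O true = ∅ ∧
  ∀ v : Bool, (run A input D α).oval O ∈ USetCfg A input D 𝒜 α O v →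
    ∃! j : Fin n, OnTeam A input D 𝒜 α j (!v)

/-- Apply the operations `o i` of the processes listed in `σ`, in order, to an object of type
`T`, starting from the value `u`. -/
def applyOps (T : DetType) (o : Fin n → T.Op) : T.Value → List (Fin n) → T.Value
  | u, [] => u
  | u, i :: σ => applyOps T o (T.δ u (o i)).2 σ

/-- `U_x`: the set of values obtainable by applying the operations of the processes of a
duplicate-free schedule whose first process is on team `x` to an object with initial value
`u`. -/
def UVals (T : DetType) (o : Fin n → T.Op) (u : T.Value) (team : Fin n → Bool) (x : Bool) :
    Set T.Value :=
  { v | ∃ (i : Fin n) (σ : List (Fin n)), team i = x ∧ (i :: σ).Nodup ∧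
        v = applyOps T o u (i :: σ) }

/-- A deterministic type `T` is `n`-recording. -/
def NRecording (n : ℕ) (T : DetType) : Prop :=
  ∃ (u : T.Value) (team : Fin n → Bool) (o : Fin n → T.Op),
    (∀ x : Bool, ∃ i, team i = x) ∧
    (UVals T o u team false ∩ UVals T o u team true = ∅) ∧
    (∀ x : Bool, u ∈ UVals T o u team x → ∃! i, team i = !x)

end RecoverableConsensus

namespace RecoverableConsensus

/-- The values of the type `𝒯_{n,n'}`: `s`, `s_⊥`, and `s_{x,i}` for `x ∈ {0,1}` and
`i ∈ {1, …, n-1}` (here `mid x i` with `i : Fin (n-1)` represents `s_{x, i+1}`). -/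
inductive TVal (n : ℕ) : Type where
  | s : TVal n
  | bot : TVal n
  | mid : Bool → Fin (n - 1) → TVal n
deriving DecidableEq

/-- The operations of `𝒯_{n,n'}`. -/
inductive TOp : Type where
  | op0 | op1 | opR
deriving DecidableEq

/-- The responses of `𝒯_{n,n'}`: a bit, a value, or `⊥`. -/
inductive TResp (n : ℕ) : Type where
  | bit : Bool → TResp n
  | val : TVal n → TResp n
  | botR : TResp n
deriving DecidableEq

/-- The deterministic (non-readable) type `𝒯_{n,n'}` for `n > n' ≥ 1`. -/
def TType (n n' : ℕ) (hn : 2 ≤ n) : DetType where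
  Value := TVal n
  Op := TOp
  Resp := TResp n
  δ := fun v op =>
    match v, op with
    | .s, .op0 => (.bit false, .mid false ⟨0, by omega⟩)
    | .s, .op1 => (.bit true, .mid true ⟨0, by omega⟩)
    | .s, .opR => (.val .s, .s)
    | .bot, _ => (.botR, .bot)
    | .mid x i, .op0 =>
        if h : i.val + 1 < n - 1 then (.bit x, .mid x ⟨i.val + 1, h⟩) else (.bit x, .bot)
    | .mid x i, .op1 =>
        if h : i.val + 1 < n - 1 then (.bit x, .mid x ⟨i.val + 1, h⟩) else (.bit x, .bot)
    | .mid x i, .opR =>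
        if i.val + 1 ≤ n' then (.val (.mid x i), .mid x i) else (.botR, .bot)

/-- The algorithm uses only objects of type `T` together with registers. -/
def UsesTypeAndRegisters {n : ℕ} (A : Algorithm n) (T : DetType) : Prop :=
  ∀ o : A.ObjIdx, A.objType o = T ∨ IsRegister (A.objType o)

end RecoverableConsensus

namespace RecoverableConsensus

open Filter

variable {N : ℕ} {A : Algorithm N}

/-! ### Crash-free executions -/

namespace Config

/-- The configuration reached from `C` by one step of process `i`. Inputs matter only for
crashes, so an arbitrary input vector is passed to `applyEvent`. -/
noncomputable def step (C : Config A) (i : Fin N) : Config A :=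
  applyEvent A (fun _ => false) C (.step i)

/-- The configuration reached from `C` when the processes listed in `l` take one step each, in
this order: crash-free executions are represented by lists of processes. -/
noncomputable def runs (C : Config A) (l : List (Fin N)) : Config A :=
  l.foldl step C

/-- Process `i` is in an output state for `v` in `C`. -/
def Decides (C : Config A) (i : Fin N) (v : Bool) : Prop :=
  A.output i (C.pstate i) = some v

variable {C : Config A} {i j : Fin N}

lemma step_of_pending_eq_none (h : A.pending i (C.pstate i) = none) : C.step i = C := by
  simp [step, applyEvent, h]

lemma step_of_pending_eq_some [DecidableEq A.ObjIdx] {O : A.ObjIdx} {op : (A.objType O).Op}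
    (h : A.pending i (C.pstate i) = some ⟨O, op⟩) :
    C.step i =
      { pstate := Function.update C.pstate i
          (A.next i (C.pstate i) O ((A.objType O).δ (C.oval O) op).1)
        oval := Function.update C.oval O ((A.objType O).δ (C.oval O) op).2 } := by
  simp only [step, applyEvent, h]
  congr!

lemma step_pstate_self {O : A.ObjIdx} {op : (A.objType O).Op}
    (h : A.pending i (C.pstate i) = some ⟨O, op⟩) :
    (C.step i).pstate i = A.next i (C.pstate i) O ((A.objType O).δ (C.oval O) op).1 := by
  classical
  simp [step_of_pending_eq_some h]

lemma step_oval_self {O : A.ObjIdx} {op : (A.objType O).Op}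
    (h : A.pending i (C.pstate i) = some ⟨O, op⟩) :
    (C.step i).oval O = ((A.objType O).δ (C.oval O) op).2 := by
  classical
  simp [step_of_pending_eq_some h]

lemma step_pstate_of_ne (C : Config A) (h : j ≠ i) : (C.step i).pstate j = C.pstate j := by
  classical
  rcases hp : A.pending i (C.pstate i) with _ | ⟨O, op⟩
  · rw [step_of_pending_eq_none hp]
  · simp [step_of_pending_eq_some hp, h]

lemma runs_cons (C : Config A) (i : Fin N) (l : List (Fin N)) :
    C.runs (i :: l) = (C.step i).runs l := rfl

lemma runs_append (C : Config A) (l₁ l₂ : List (Fin N)) :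
    C.runs (l₁ ++ l₂) = (C.runs l₁).runs l₂ :=
  List.foldl_append

lemma runs_map_range_succ (C : Config A) (f : ℕ → Fin N) (k : ℕ) :
    C.runs ((List.range (k + 1)).map f) = (C.runs ((List.range k).map f)).step (f k) := by
  simp [runs, List.range_succ]

lemma runs_pstate_of_notMem (C : Config A) {l : List (Fin N)} (h : j ∉ l) :
    (C.runs l).pstate j = C.pstate j := by
  induction l generalizing C with
  | nil => rfl
  | cons i l ih =>
    rw [List.mem_cons, not_or] at h
    rw [runs_cons, ih _ h.2, step_pstate_of_ne C h.1]

lemma Decides.step {v : Bool} (h : C.Decides j v) (i : Fin N) : (C.step i).Decides j v := by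
  rcases eq_or_ne j i with rfl | hji
  · rwa [step_of_pending_eq_none (A.output_noop j _ (by rw [Decides] at h; simp [h]))]
  · rwa [Decides, step_pstate_of_ne C hji]

lemma Decides.runs {v : Bool} (h : C.Decides j v) (l : List (Fin N)) :
    (C.runs l).Decides j v := by
  induction l generalizing C with
  | nil => exact h
  | cons i _ ih => exact ih (h.step i)

lemma run_map_step (input : Fin N → Bool) (C : Config A) (l : List (Fin N)) :
    run A input C (l.map Event.step) = C.runs l := by
  induction l generalizing C with
  | nil => rfl
  | cons _ _ ih => exact ih _

end Config

lemma crashFree_map_step (l : List (Fin N)) : CrashFree (l.map Event.step) := by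
  simp [CrashFree]

lemma CrashFree.exists_eq_map_step {σ : List (Event N)} (h : CrashFree σ) :
    ∃ l : List (Fin N), σ = l.map Event.step := by
  induction σ with
  | nil => exact ⟨[], rfl⟩
  | cons e σ ih =>
    obtain ⟨l, rfl⟩ := ih fun i hi => h i (List.mem_cons_of_mem _ hi)
    cases e with
    | step i => exact ⟨i :: l, rfl⟩
    | crash i => exact absurd List.mem_cons_self (h i)

lemma hasDecided_map_step_iff {input : Fin N → Bool} {C : Config A} {l : List (Fin N)}
    {i : Fin N} {v : Bool} :
    HasDecided A input C (l.map Event.step) i v ↔ (C.runs l).Decides i v := by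
  refine ⟨?_, fun h => ⟨_, List.prefix_rfl, by rwa [Config.run_map_step]⟩⟩
  rintro ⟨τ, hτ, h⟩
  obtain ⟨l₁, ⟨l₂, rfl⟩, rfl⟩ := List.prefix_map_iff.1 hτ
  rw [Config.run_map_step] at h
  rw [Config.runs_append]
  exact Config.Decides.runs h l₂

lemma agreementCF_iff :
    AgreementCF A ↔ ∀ (input : Fin N → Bool) (l : List (Fin N)) (i j : Fin N) (v w : Bool),
      ((initConfig A input).runs l).Decides i v → ((initConfig A input).runs l).Decides j w →
        v = w := by
  constructor
  · intro h input l i j v w hi hj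
    exact h input _ (crashFree_map_step l) i j v w (hasDecided_map_step_iff.2 hi)
      (hasDecided_map_step_iff.2 hj)
  · intro h input σ hσ i j v w hi hj
    obtain ⟨l, rfl⟩ := hσ.exists_eq_map_step
    exact h input l i j v w (hasDecided_map_step_iff.1 hi) (hasDecided_map_step_iff.1 hj)

lemma validityCF_iff :
    ValidityCF A ↔ ∀ (input : Fin N → Bool) (l : List (Fin N)) (i : Fin N) (v : Bool),
      ((initConfig A input).runs l).Decides i v → ∃ j, input j = v := by
  constructor
  · intro h input l i v hi
    exact h input _ (crashFree_map_step l) i v (hasDecided_map_step_iff.2 hi)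
  · intro h input σ hσ i v hi
    obtain ⟨l, rfl⟩ := hσ.exists_eq_map_step
    exact h input l i v (hasDecided_map_step_iff.1 hi)

lemma waitFree_iff :
    WaitFree A ↔ ∀ (input : Fin N → Bool) (f : ℕ → Fin N) (i : Fin N),
      (∃ᶠ k in atTop, f k = i) →
        ∃ k v, ((initConfig A input).runs ((List.range k).map f)).Decides i v := by
  have run_initSeg (input : Fin N → Bool) (f : ℕ → Fin N) (k : ℕ) :
      run A input (initConfig A input) (initSeg (fun m => .step (f m)) k) =
        (initConfig A input).runs ((List.range k).map f) := by
    rw [← Config.run_map_step input, List.map_map]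
    rfl
  simp only [frequently_atTop]
  constructor
  · intro h input f i hf
    obtain ⟨k, v, hk⟩ := h input (fun m => .step (f m)) (by simp) i (by simpa using hf)
    exact ⟨k, v, run_initSeg input f k ▸ hk⟩
  · intro h input e he i hi
    have he' : ∀ k, ∃ j, e k = .step j := fun k => by
      cases hk : e k with
      | step j => exact ⟨j, rfl⟩
      | crash j => exact absurd hk (he k j)
    choose f hf using he'
    obtain rfl : e = fun m => .step (f m) := funext hf
    obtain ⟨k, v, hk⟩ := h input f i (by simpa using hi)
    exact ⟨k, v, run_initSeg input f k ▸ hk⟩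

/-! ### Valency -/

namespace Config

/-- `C` is reached by a crash-free execution from the initial configuration for `input`. -/
def Reachable (input : Fin N → Bool) (C : Config A) : Prop :=
  ∃ l, (initConfig A input).runs l = C

/-- Some crash-free execution from `C` leads to a decision for `v`. -/
def CanDecide (C : Config A) (v : Bool) : Prop :=
  ∃ l i, (C.runs l).Decides i v

/-- Both values can be decided from `C`. -/
def Bivalent (C : Config A) : Prop :=
  ∀ v, C.CanDecide v

/-- `C` is bivalent and no one-step successor of `C` is. -/
structure IsCritical (C : Config A) : Prop where
  bivalent : C.Bivalent
  not_bivalent_step (i : Fin N) : ¬ (C.step i).Bivalent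

/-- Process `j` cannot tell `C` from `D` as long as it runs alone: the objects have the same
values and `j` is in the same state. -/
structure IndistTo (j : Fin N) (C D : Config A) : Prop where
  oval_eq : C.oval = D.oval
  pstate_eq : C.pstate j = D.pstate j

variable {C D : Config A} {input : Fin N → Bool} {i j : Fin N} {v : Bool}

lemma reachable_initConfig (input : Fin N → Bool) : (initConfig A input).Reachable input :=
  ⟨[], rfl⟩

lemma Reachable.runs (h : C.Reachable input) (l : List (Fin N)) :
    (C.runs l).Reachable input := by
  obtain ⟨l', rfl⟩ := h
  exact ⟨l' ++ l, runs_append _ _ _⟩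

lemma Reachable.step (h : C.Reachable input) (i : Fin N) : (C.step i).Reachable input :=
  h.runs [i]

lemma CanDecide.of_runs {l : List (Fin N)} (h : (C.runs l).CanDecide v) : C.CanDecide v := by
  obtain ⟨l', i, h⟩ := h
  exact ⟨l ++ l', i, by rwa [runs_append]⟩

lemma CanDecide.of_step (h : (C.step i).CanDecide v) : C.CanDecide v :=
  CanDecide.of_runs (l := [i]) h

lemma IndistTo.step (h : IndistTo j C D) : IndistTo j (C.step j) (D.step j) := by
  classical
  rcases hC : A.pending j (C.pstate j) with _ | ⟨O, op⟩
  · rwa [step_of_pending_eq_none hC, step_of_pending_eq_none (h.pstate_eq ▸ hC)]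
  · have hD : A.pending j (D.pstate j) = some ⟨O, op⟩ := h.pstate_eq ▸ hC
    constructor <;> simp [step_of_pending_eq_some hC, step_of_pending_eq_some hD,
      h.oval_eq, h.pstate_eq]

lemma IndistTo.runs_replicate (h : IndistTo j C D) (m : ℕ) :
    IndistTo j (C.runs (List.replicate m j)) (D.runs (List.replicate m j)) := by
  induction m generalizing C D with
  | zero => exact h
  | succ _ ih => exact ih h.step

/-- Wait-freedom only speaks of executions from an initial configuration; it is applied to an
execution leading to `C` that is continued by steps of `j` alone. -/
lemma Reachable.exists_decides_runs_replicate (hW : WaitFree A) (hC : C.Reachable input)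
    (j : Fin N) : ∃ m v, (C.runs (List.replicate m j)).Decides j v := by
  obtain ⟨l, rfl⟩ := hC
  have hfreq : ∃ᶠ k in atTop, l.getD k j = j :=
    Eventually.frequently (eventually_atTop.2 ⟨l.length, fun k hk => by simp [hk]⟩)
  obtain ⟨m, v, h⟩ := waitFree_iff.1 hW input (fun k => l.getD k j) j hfreq
  have hsched : l ++ List.replicate m j =
      (List.range (m + l.length)).map fun k => l.getD k j := by
    refine List.ext_getElem (by simp [add_comm]) fun k _ _ => ?_
    by_cases hk : k < l.length
    · simp [hk]
    · simp [hk, List.getElem_append_right (not_lt.1 hk)]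
  refine ⟨m, v, ?_⟩
  rw [← runs_append, hsched, List.range_add, List.map_append, runs_append]
  exact h.runs _

lemma Reachable.exists_canDecide_of_indistTo (hW : WaitFree A) (hC : C.Reachable input)
    (h : IndistTo j C D) : ∃ v, C.CanDecide v ∧ D.CanDecide v := by
  obtain ⟨m, v, hv⟩ := hC.exists_decides_runs_replicate hW j
  exact ⟨v, ⟨_, j, hv⟩, ⟨_, j, by rwa [Decides, ← (h.runs_replicate m).pstate_eq]⟩⟩

lemma Bivalent.not_decides (hA : AgreementCF A) (hC : C.Reachable input) (hb : C.Bivalent) :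
    ¬ C.Decides i v := by
  intro hi
  obtain ⟨l, j, hj⟩ := hb (!v)
  obtain ⟨l', hl'⟩ := hC.runs l
  rw [← hl'] at hj
  exact Bool.not_ne_self v
    (agreementCF_iff.1 hA input l' j i _ _ hj (hl' ▸ hi.runs l))

lemma Bivalent.exists_canDecide_step (hA : AgreementCF A) (hC : C.Reachable input)
    (hb : C.Bivalent) (v : Bool) : ∃ i, (C.step i).CanDecide v := by
  obtain ⟨_ | ⟨i, l⟩, j, hj⟩ := hb v
  · exact absurd hj (hb.not_decides hA hC)
  · exact ⟨i, l, j, hj⟩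

/-- A process running alone from an initial configuration cannot tell whether all inputs equal
its own, so by validity it decides its own input. -/
lemma canDecide_initConfig (hV : ValidityCF A) (hW : WaitFree A) (input : Fin N → Bool)
    (i : Fin N) : (initConfig A input).CanDecide (input i) := by
  have hindist : IndistTo i (initConfig A fun _ => input i) (initConfig A input) := ⟨rfl, rfl⟩
  obtain ⟨m, v, h⟩ :=
    (reachable_initConfig (A := A) fun _ => input i).exists_decides_runs_replicate hW i
  obtain ⟨-, rfl⟩ := validityCF_iff.1 hV _ _ _ _ h
  exact ⟨_, i, by rwa [Decides, ← (hindist.runs_replicate m).pstate_eq]⟩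

lemma exists_not_bivalent_runs (hA : AgreementCF A) (hW : WaitFree A) (input : Fin N → Bool)
    (f : ℕ → Fin N) : ∃ k, ¬ ((initConfig A input).runs ((List.range k).map f)).Bivalent := by
  obtain ⟨i, hi⟩ := Finite.exists_infinite_fiber f
  have hfreq : ∃ᶠ k in atTop, f k = i :=
    Nat.frequently_atTop_iff_infinite.2 (Set.infinite_coe_iff.1 hi)
  obtain ⟨k, v, h⟩ := waitFree_iff.1 hW input f i hfreq
  exact ⟨k, fun hb => hb.not_decides hA ((reachable_initConfig input).runs _) h⟩

lemma exists_isCritical (hA : AgreementCF A) (hW : WaitFree A)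
    (h0 : (initConfig A input).Bivalent) : ∃ C : Config A, C.Reachable input ∧ C.IsCritical := by
  by_contra! hcon
  have hnext (C : Config A) (hC : C.Reachable input) (hb : C.Bivalent) :
      ∃ i, (C.step i).Bivalent := by
    by_contra! h
    exact hcon C hC ⟨hb, h⟩
  have : Nonempty (Fin N) := (hnext _ (reachable_initConfig input) h0).nonempty
  choose! g hg using hnext
  let c (k : ℕ) : Config A := (fun C => C.step (g C))^[k] (initConfig A input)
  have hc_succ (k : ℕ) : c (k + 1) = (c k).step (g (c k)) := Function.iterate_succ_apply' _ _ _
  have hc_eq (k : ℕ) : (initConfig A input).runs ((List.range k).map fun m => g (c m)) = c k := by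
    induction k with
    | zero => rfl
    | succ k ih => rw [runs_map_range_succ, ih, hc_succ]
  have hc_bivalent (k : ℕ) : (c k).Bivalent := by
    induction k with
    | zero => exact h0
    | succ k ih => exact hc_succ k ▸ hg _ (hc_eq k ▸ (reachable_initConfig input).runs _) ih
  obtain ⟨k, hk⟩ := exists_not_bivalent_runs hA hW input fun m => g (c m)
  exact hk (hc_eq k ▸ hc_bivalent k)

end Config

/-! ### Discerning types -/

/-- `R_{x,j}`: the pairs of a response to the operation of process `j` and a final value
obtainable by applying the operations of the processes of a duplicate-free schedule
`l₁ ++ j :: l₂` to an object with initial value `u`, where the first process of the schedule,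
`l₁.headD j`, is on team `x`. -/
def RespVals (T : DetType) (o : Fin N → T.Op) (u : T.Value) (team : Fin N → Bool) (x : Bool)
    (j : Fin N) : Set (T.Resp × T.Value) :=
  { p | ∃ l₁ l₂ : List (Fin N), (l₁ ++ j :: l₂).Nodup ∧ team (l₁.headD j) = x ∧
        p = ((T.δ (applyOps T o u l₁) (o j)).1, applyOps T o u (l₁ ++ j :: l₂)) }

/-- Ruppert's `N`-discerning types: for some initial value, some operation for each process and
some splitting of the processes into two nonempty teams, every process that takes its step can
tell from its response and the final value which team went first. -/
def Discerning (N : ℕ) (T : DetType) : Prop :=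
  ∃ (u : T.Value) (team : Fin N → Bool) (o : Fin N → T.Op),
    (∀ x, ∃ i, team i = x) ∧
    ∀ j, Disjoint (RespVals T o u team false j) (RespVals T o u team true j)

lemma eq_of_forall_team_ne {ι α : Type*} {team : ι → Bool} (hteam : ∀ x, ∃ i, team i = x)
    {f : ι → α} (h : ∀ i j, team i ≠ team j → f i = f j) (i j : ι) : f i = f j := by
  by_cases hij : team i = team j
  · obtain ⟨k, hk⟩ := hteam (!team i)
    exact (h i k (by simp [hk])).trans (h k j (by simp [hk, hij]))
  · exact h i j hij

namespace Config

variable {C : Config A} {input : Fin N → Bool} {i j : Fin N} {v : Bool} {O : A.ObjIdx}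

lemma step_comm {P : A.ObjIdx} (hOP : O ≠ P) (hi : PoisedAt A C i O) (hj : PoisedAt A C j P) :
    (C.step i).step j = (C.step j).step i := by
  classical
  obtain ⟨a, ha⟩ := hi
  obtain ⟨b, hb⟩ := hj
  have hij : i ≠ j := by
    rintro rfl
    exact hOP (congrArg Sigma.fst (Option.some.inj (ha.symm.trans hb)))
  have hb' : A.pending j ((C.step i).pstate j) = some ⟨P, b⟩ := by
    rwa [step_pstate_of_ne C hij.symm]
  have ha' : A.pending i ((C.step j).pstate i) = some ⟨O, a⟩ := by
    rwa [step_pstate_of_ne C hij]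
  rw [step_of_pending_eq_some hb', step_of_pending_eq_some ha', step_of_pending_eq_some ha,
    step_of_pending_eq_some hb]
  simp [hOP, hOP.symm, hij, hij.symm, Function.update_comm hOP, Function.update_comm hij]

variable {o : Fin N → (A.objType O).Op}

lemma runs_oval_of_pending [DecidableEq A.ObjIdx] {l : List (Fin N)} (hl : l.Nodup)
    (ho : ∀ i ∈ l, A.pending i (C.pstate i) = some ⟨O, o i⟩) :
    (C.runs l).oval = Function.update C.oval O (applyOps (A.objType O) o (C.oval O) l) := by
  induction l generalizing C with
  | nil => exact (Function.update_eq_self O C.oval).symm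
  | cons i l ih =>
    obtain ⟨hil, hl⟩ := List.nodup_cons.1 hl
    have hstep := step_of_pending_eq_some (ho i List.mem_cons_self)
    rw [runs_cons, ih hl fun k hk => ?_, hstep]
    · simp [applyOps]
    · rw [step_pstate_of_ne C (ne_of_mem_of_not_mem hk hil)]
      exact ho k (List.mem_cons_of_mem _ hk)

lemma runs_pstate_of_pending {l₁ l₂ : List (Fin N)} (hl : (l₁ ++ j :: l₂).Nodup)
    (ho : ∀ i, A.pending i (C.pstate i) = some ⟨O, o i⟩) :
    (C.runs (l₁ ++ j :: l₂)).pstate j = A.next j (C.pstate j) O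
      ((A.objType O).δ (applyOps (A.objType O) o (C.oval O) l₁) (o j)).1 := by
  classical
  obtain ⟨hl₁, hl₂, hdisj⟩ := List.nodup_append.1 hl
  have hj₁ : j ∉ l₁ := fun h => hdisj j h j List.mem_cons_self rfl
  have hpstate : (C.runs l₁).pstate j = C.pstate j := runs_pstate_of_notMem C hj₁
  have hj : A.pending j ((C.runs l₁).pstate j) = some ⟨O, o j⟩ := hpstate ▸ ho j
  rw [runs_append, runs_cons, runs_pstate_of_notMem _ (List.nodup_cons.1 hl₂).1,
    step_pstate_self hj, runs_oval_of_pending hl₁ fun i _ => ho i, hpstate]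
  simp

lemma indistTo_runs_of_respVals {l₁ l₂ m₁ m₂ : List (Fin N)} (hl : (l₁ ++ j :: l₂).Nodup)
    (hm : (m₁ ++ j :: m₂).Nodup) (ho : ∀ i, A.pending i (C.pstate i) = some ⟨O, o i⟩)
    (hresp : ((A.objType O).δ (applyOps (A.objType O) o (C.oval O) l₁) (o j)).1 =
      ((A.objType O).δ (applyOps (A.objType O) o (C.oval O) m₁) (o j)).1)
    (hval : applyOps (A.objType O) o (C.oval O) (l₁ ++ j :: l₂) =
      applyOps (A.objType O) o (C.oval O) (m₁ ++ j :: m₂)) :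
    IndistTo j (C.runs (l₁ ++ j :: l₂)) (C.runs (m₁ ++ j :: m₂)) := by
  classical
  constructor
  · rw [runs_oval_of_pending hl fun i _ => ho i, runs_oval_of_pending hm fun i _ => ho i, hval]
  · rw [runs_pstate_of_pending hl ho, runs_pstate_of_pending hm ho, hresp]

lemma CanDecide.step_headD {l₁ l₂ : List (Fin N)}
    (h : (C.runs (l₁ ++ j :: l₂)).CanDecide v) : (C.step (l₁.headD j)).CanDecide v := by
  cases l₁ <;> exact CanDecide.of_runs h

lemma IsCritical.exists_team (hA : AgreementCF A) (hC : C.Reachable input)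
    (hcrit : C.IsCritical) :
    ∃ team : Fin N → Bool, (∀ x, ∃ i, team i = x) ∧
      ∀ i v, (C.step i).CanDecide v → team i = v := by
  have hteam (i : Fin N) : ∃ x, ∀ v, (C.step i).CanDecide v → x = v := by
    obtain ⟨w, hw⟩ := not_forall.1 (hcrit.not_bivalent_step i)
    exact ⟨!w, fun v hv => (Bool.eq_not_of_ne (by rintro rfl; exact hw hv)).symm⟩
  choose team hteam using hteam
  refine ⟨team, fun x => ?_, hteam⟩
  obtain ⟨i, hi⟩ := hcrit.bivalent.exists_canDecide_step hA hC x
  exact ⟨i, hteam i x hi⟩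

lemma IsCritical.exists_poisedAt (hcrit : C.IsCritical) (i : Fin N) :
    ∃ O, PoisedAt A C i O := by
  rcases h : A.pending i (C.pstate i) with _ | ⟨O, op⟩
  · exact absurd (by rw [step_of_pending_eq_none h]; exact hcrit.bivalent)
      (hcrit.not_bivalent_step i)
  · exact ⟨O, op, h⟩

lemma IsCritical.exists_forall_poisedAt (hW : WaitFree A) (hC : C.Reachable input)
    (hcrit : C.IsCritical) {team : Fin N → Bool} (hsurj : ∀ x, ∃ i, team i = x)
    (hteam : ∀ i v, (C.step i).CanDecide v → team i = v) : ∃ O, ∀ i, PoisedAt A C i O := by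
  choose obj hobj using hcrit.exists_poisedAt
  have hobj_eq (i j : Fin N) (hij : team i ≠ team j) : obj i = obj j := by
    by_contra hne
    have hcomm := step_comm hne (hobj i) (hobj j)
    obtain ⟨m, v, hdec⟩ := ((hC.step i).step j).exists_decides_runs_replicate hW i
    have hv : ((C.step i).step j).CanDecide v := ⟨_, i, hdec⟩
    exact hij ((hteam i v hv.of_step).trans (hteam j v (hcomm ▸ hv).of_step).symm)
  obtain ⟨k, -⟩ := hsurj true
  exact ⟨obj k, fun i => eq_of_forall_team_ne hsurj hobj_eq i k ▸ hobj i⟩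

end Config

lemma exists_bivalent_initConfig (hN : 2 ≤ N) (hV : ValidityCF A) (hW : WaitFree A) :
    ∃ input, (initConfig A input).Bivalent := by
  refine ⟨fun i => decide (i = ⟨0, by omega⟩), fun v => ?_⟩
  cases v
  · simpa using Config.canDecide_initConfig hV hW (fun i => decide (i = ⟨0, by omega⟩)) ⟨1, hN⟩
  · simpa using Config.canDecide_initConfig hV hW (fun i => decide (i = ⟨0, by omega⟩))
      ⟨0, by omega⟩

theorem exists_discerning_of_solvesWFConsensus (hN : 2 ≤ N) (hA : SolvesWFConsensus A) :
    ∃ O, Discerning N (A.objType O) := by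
  obtain ⟨hagree, hvalid, hwf⟩ := hA
  obtain ⟨input, h0⟩ := exists_bivalent_initConfig hN hvalid hwf
  obtain ⟨C, hC, hcrit⟩ := Config.exists_isCritical hagree hwf h0
  obtain ⟨team, hsurj, hteam⟩ := hcrit.exists_team hagree hC
  obtain ⟨O, hO⟩ := hcrit.exists_forall_poisedAt hwf hC hsurj hteam
  choose o ho using hO
  refine ⟨O, C.oval O, team, o, hsurj, fun j => Set.disjoint_left.2 ?_⟩
  rintro _ ⟨l₁, l₂, hl, hl_team, rfl⟩ ⟨m₁, m₂, hm, hm_team, heq⟩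
  obtain ⟨hresp, hval⟩ := Prod.mk.inj heq
  obtain ⟨v, hv₁, hv₂⟩ := (hC.runs _).exists_canDecide_of_indistTo hwf
    (Config.indistTo_runs_of_respVals hl hm ho hresp hval)
  have hv_false : false = v := hl_team ▸ hteam _ v hv₁.step_headD
  have hv_true : true = v := hm_team ▸ hteam _ v hv₂.step_headD
  exact Bool.false_ne_true (hv_false.trans hv_true.symm)

section NotDiscerning

variable {T : DetType} {o : Fin N → T.Op} {u : T.Value} {team : Fin N → Bool} {i j : Fin N}

lemma not_disjoint_respVals {x y : Bool} (hxy : x ≠ y) {p : T.Resp × T.Value}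
    (hx : p ∈ RespVals T o u team x j) (hy : p ∈ RespVals T o u team y j) :
    ¬ Disjoint (RespVals T o u team false j) (RespVals T o u team true j) := by
  rw [Set.not_disjoint_iff]
  cases x <;> cases y
  exacts [absurd rfl hxy, ⟨p, hx, hy⟩, ⟨p, hy, hx⟩, absurd rfl hxy]

lemma not_disjoint_respVals_of_overwrite (hij : team i ≠ team j)
    (h : T.δ (T.δ u (o i)).2 (o j) = T.δ u (o j)) :
    ¬ Disjoint (RespVals T o u team false j) (RespVals T o u team true j) := by
  have hpair : T.δ (T.δ u (o i)).2 (o j) ∈ RespVals T o u team (team i) j :=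
    ⟨[i], [], by simp [ne_of_apply_ne team hij], rfl, rfl⟩
  have hsolo : T.δ u (o j) ∈ RespVals T o u team (team j) j := ⟨[], [], by simp, rfl, rfl⟩
  exact not_disjoint_respVals hij (h ▸ hpair) hsolo

lemma exists_not_disjoint_respVals_of_overwrite (hij : team i ≠ team j)
    (h : T.δ (T.δ u (o i)).2 (o j) = T.δ u (o j) ∨ T.δ (T.δ u (o j)).2 (o i) = T.δ u (o i)) :
    ∃ k, ¬ Disjoint (RespVals T o u team false k) (RespVals T o u team true k) :=
  h.elim (fun h => ⟨j, not_disjoint_respVals_of_overwrite hij h⟩)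
    fun h => ⟨i, not_disjoint_respVals_of_overwrite hij.symm h⟩

lemma exists_not_disjoint_respVals_of_absorbing (hN : 3 ≤ N) (hteam : ∀ x, ∃ i, team i = x)
    {b : T.Value}
    (h : ∀ l : List (Fin N), l.Nodup → N ≤ l.length + 1 → applyOps T o u l = b) :
    ∃ k, ¬ Disjoint (RespVals T o u team false k) (RespVals T o u team true k) := by
  obtain ⟨i, hi⟩ := hteam false
  obtain ⟨j, hj⟩ := hteam true
  obtain ⟨k, hki, hkj⟩ := Fin.exists_ne_and_ne_of_two_lt i j hN
  have hmem (r : Fin N) (hkr : k ≠ r) :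
      ((T.δ b (o k)).1, b) ∈ RespVals T o u team (team r) k := by
    let others : List (Fin N) := ((Finset.univ.erase k).erase r).toList
    have hlength : others.length = N - 1 - 1 := by
      simp [others, Finset.card_erase_of_mem, hkr.symm]
    have hall : (r :: others ++ [k]).Nodup := by
      simp [others, List.nodup_append, Finset.nodup_toList, hkr.symm]
    have hbefore : applyOps T o u (r :: others) = b :=
      h _ (List.nodup_append.1 hall).1 (by simp; omega)
    refine ⟨r :: others, [], hall, rfl, ?_⟩
    rw [hbefore, h _ hall (by simp; omega)]
  exact ⟨k, not_disjoint_respVals (by simp [hi, hj]) (hmem i hki) (hmem j hkj)⟩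

end NotDiscerning

lemma not_discerning_registerType (V : Type) : ¬ Discerning N (RegisterType V) := by
  rintro ⟨u, team, o, hteam, hdisj⟩
  obtain ⟨i, hi⟩ := hteam false
  obtain ⟨j, hj⟩ := hteam true
  have hoverwrite (a b : Option V) :
      (RegisterType V).δ ((RegisterType V).δ u a).2 b = (RegisterType V).δ u b ∨
        (RegisterType V).δ ((RegisterType V).δ u b).2 a = (RegisterType V).δ u a := by
    cases b with
    | none => exact .inr rfl
    | some w => exact .inl rfl
  obtain ⟨k, hk⟩ := exists_not_disjoint_respVals_of_overwrite (team := team) (i := i) (j := j)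
    (by simp [hi, hj]) (hoverwrite (o i) (o j))
  exact hk (hdisj k)

/-! ### The type `𝒯_{n,n'}` -/

/-- The operation `op_x`. -/
def TOp.ofBit (x : Bool) : TOp := if x then .op1 else .op0

/-- The value `s_{x,c}`, extended to all `c` by `s_{x,0} = s` and `s_{x,c} = s_⊥` for `c ≥ n`:
the value after `c` operations `op_0` or `op_1`, the first of which was `op_x`. -/
def TVal.stage (n : ℕ) (x : Bool) : ℕ → TVal n
  | 0 => .s
  | c + 1 => if h : c < n - 1 then .mid x ⟨c, h⟩ else .bot

namespace TType

variable {n n' : ℕ} (hn : 2 ≤ n)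

lemma δ_s_ofBit (b : Bool) :
    (TType n n' hn).δ (TVal.s : TVal n) (.ofBit b) = (.bit b, TVal.stage n b 1) := by
  have : 0 < n - 1 := by omega
  cases b <;> simp [TType, TOp.ofBit, TVal.stage, this]

lemma δ_stage_succ_ofBit (x b : Bool) (c : ℕ) :
    (TType n n' hn).δ (TVal.stage n x (c + 1)) (.ofBit b) =
      (if c + 1 < n then .bit x else .botR, TVal.stage n x (c + 2)) := by
  by_cases hc : c < n - 1
  · have : c + 1 < n := by omega
    cases b <;> by_cases hc' : c + 1 < n - 1 <;> simp [TType, TOp.ofBit, TVal.stage, *]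
  · have h1 : ¬ c + 1 < n := by omega
    have h2 : ¬ c + 1 < n - 1 := by omega
    simp [TType, TVal.stage, *]

lemma exists_δ_ofBit_eq_stage (u : TVal n) (b : Bool) :
    ∃ x c, ((TType n n' hn).δ u (.ofBit b)).2 = TVal.stage n x (c + 1) := by
  cases u with
  | s => exact ⟨b, 0, by rw [δ_s_ofBit]⟩
  | bot => exact ⟨b, n - 1, by simp [TVal.stage, TType]⟩
  | mid x p =>
    have hp : TVal.mid x p = TVal.stage n x (p.val + 1) := by simp [TVal.stage]
    exact ⟨x, p.val + 1, by rw [hp, δ_stage_succ_ofBit]⟩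

lemma applyOps_stage_succ (b : Fin N → Bool) (x : Bool) (c : ℕ) (l : List (Fin N)) :
    applyOps (TType n n' hn) (fun i => .ofBit (b i)) (TVal.stage n x (c + 1)) l =
      TVal.stage n x (c + 1 + l.length) := by
  induction l generalizing c with
  | nil => rfl
  | cons i l ih =>
    have hfirst := congrArg (fun p => applyOps (TType n n' hn) (fun i => .ofBit (b i)) p.2 l)
      (δ_stage_succ_ofBit hn x (b i) c)
    have hlength : c + 1 + (i :: l).length = c + 1 + 1 + l.length := by
      rw [List.length_cons]
      omega
    exact hfirst.trans (hlength ▸ ih (c + 1))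

lemma applyOps_eq_bot (b : Fin N → Bool) (u : TVal n) {l : List (Fin N)} (hl : n ≤ l.length) :
    applyOps (TType n n' hn) (fun i => .ofBit (b i)) u l = (TVal.bot : TVal n) := by
  cases l with
  | nil => exact absurd hl (by simp; omega)
  | cons i l =>
    obtain ⟨x, c, h⟩ := exists_δ_ofBit_eq_stage (n' := n') hn u (b i)
    have hc : ¬ c + l.length < n - 1 := by
      rw [List.length_cons] at hl
      omega
    have hfirst := congrArg (fun v => applyOps (TType n n' hn) (fun i => .ofBit (b i)) v l) h
    have hlast : TVal.stage n x (c + 1 + l.length) = .bot := by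
      rw [Nat.add_right_comm]
      exact dif_neg hc
    exact (hfirst.trans (applyOps_stage_succ hn b x c l)).trans hlast

/-- If `op_R` changes the value, it leads to `s_⊥`, also after any other operation. -/
lemma opR_overwrite (u : TVal n) (a : TOp) :
    (TType n n' hn).δ ((TType n n' hn).δ u a).2 .opR = (TType n n' hn).δ u .opR ∨
      (TType n n' hn).δ ((TType n n' hn).δ u .opR).2 a = (TType n n' hn).δ u a := by
  cases u with
  | s => exact .inr rfl
  | bot => exact .inr rfl
  | mid x p =>
    by_cases hp : p.val + 1 ≤ n'
    · simp [TType, hp]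
    · have hp' : ¬ p.val + 1 + 1 ≤ n' := by omega
      cases a <;> by_cases hlast : p.val + 1 < n - 1 <;> simp [TType, hp, hp', hlast]

lemma not_discerning (h : n < N) : ¬ Discerning N (TType n n' hn) := by
  rintro ⟨u, team, o, hteam, hdisj⟩
  obtain ⟨k, hk⟩ : ∃ k, ¬ Disjoint (RespVals _ o u team false k) (RespVals _ o u team true k) := by
    by_cases hread : ∃ r, o r = TOp.opR
    · obtain ⟨r, hr⟩ := hread
      obtain ⟨i, hi⟩ := hteam (!team r)
      exact exists_not_disjoint_respVals_of_overwrite (i := i) (j := r) (by simp [hi])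
        (hr ▸ opR_overwrite hn u (o i))
    · have hbit (i : Fin N) : ∃ x, o i = TOp.ofBit x := by
        cases hi : o i with
        | op0 => exact ⟨false, rfl⟩
        | op1 => exact ⟨true, rfl⟩
        | opR => exact absurd ⟨i, hi⟩ hread
      choose b hb using hbit
      obtain rfl : o = fun i => TOp.ofBit (b i) := funext hb
      exact exists_not_disjoint_respVals_of_absorbing (by omega) hteam
        fun l _ hl => applyOps_eq_bot hn b u (by omega)
  exact hk (hdisj k)

end TType

/-! ### The one-object algorithm -/

/-- The algorithm whose only object has type `𝒯_{n,n'}` and initial value `s`: a process with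
input `x` applies `op_x` and decides the response. In state `inl x` it has input `x` and has not
moved yet; in state `inr x` it has decided `x`. -/
def oneShot (N n n' : ℕ) (hn : 2 ≤ n) : Algorithm N where
  ObjIdx := Unit
  objType _ := TType n n' hn
  objInit _ := TVal.s
  PState _ := Bool ⊕ Bool
  init _ x := .inl x
  pending _
    | .inl x => some ⟨(), TOp.ofBit x⟩
    | .inr _ => none
  next _ _ _ (r : TResp n) := match r with
    | .bit x => .inr x
    | _ => .inr false
  output _ := Sum.getRight?
  output_noop _ s h := by cases s <;> simp_all

/-- The invariant of `oneShot`: `S` is the set of processes that have moved, and `x` is the input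
of the first of them (arbitrary while `S` is empty). -/
structure OneShotInv {N n n' : ℕ} {hn : 2 ≤ n} (input : Fin N → Bool)
    (C : Config (oneShot N n n' hn)) (x : Bool) (S : Finset (Fin N)) : Prop where
  exists_input_eq : S.Nonempty → ∃ j, input j = x
  pstate_of_mem : ∀ i ∈ S, C.pstate i = .inr x
  pstate_of_notMem : ∀ i ∉ S, C.pstate i = .inl (input i)
  oval_eq : C.oval () = TVal.stage n x S.card

section OneShot

variable {n n' : ℕ} {hn : 2 ≤ n} {input : Fin N → Bool} {C : Config (oneShot N n n' hn)}
  {x : Bool} {S : Finset (Fin N)}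

lemma oneShotInv_initConfig (input : Fin N → Bool) (x : Bool) :
    OneShotInv input (initConfig (oneShot N n n' hn) input) x ∅ where
  exists_input_eq h := absurd h Finset.not_nonempty_empty
  pstate_of_mem := by simp
  pstate_of_notMem _ _ := rfl
  oval_eq := rfl

namespace OneShotInv

lemma step_of_mem (h : OneShotInv input C x S) {i : Fin N} (hi : i ∈ S) : C.step i = C :=
  Config.step_of_pending_eq_none (by rw [h.pstate_of_mem i hi]; rfl)

lemma step_of_notMem (h : OneShotInv input C x S) {i : Fin N} (hi : i ∉ S) (hS : S.card < n) :
    ∃ y, OneShotInv input (C.step i) y (insert i S) := by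
  obtain ⟨y, hy, hyS, hδ⟩ : ∃ y, (∃ j, input j = y) ∧ (∀ k ∈ S, C.pstate k = .inr y) ∧
      (TType n n' hn).δ (C.oval ()) (.ofBit (input i)) =
        (.bit y, TVal.stage n y (S.card + 1)) := by
    rw [h.oval_eq]
    rcases S.eq_empty_or_nonempty with rfl | hne
    · exact ⟨input i, ⟨i, rfl⟩, by simp, TType.δ_s_ofBit hn (input i)⟩
    · obtain ⟨c, hc⟩ := Nat.exists_eq_add_one.2 hne.card_pos
      refine ⟨x, h.exists_input_eq hne, h.pstate_of_mem, ?_⟩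
      rw [hc, TType.δ_stage_succ_ofBit]
      exact Prod.ext (if_pos (hc ▸ hS)) rfl
  have hpending : (oneShot N n n' hn).pending i (C.pstate i) = some ⟨(), TOp.ofBit (input i)⟩ := by
    rw [h.pstate_of_notMem i hi]; rfl
  have hpstate : (C.step i).pstate i = .inr y := (Config.step_pstate_self hpending).trans
    (congrArg (fun p => (oneShot N n n' hn).next i (C.pstate i) () p.1) hδ)
  have hoval : (C.step i).oval () = TVal.stage n y (S.card + 1) :=
    (Config.step_oval_self hpending).trans (congrArg Prod.snd hδ)
  refine ⟨y, fun _ => hy, fun k hk => ?_, fun k hk => ?_, ?_⟩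
  · rcases eq_or_ne k i with rfl | hki
    · exact hpstate
    · rw [Config.step_pstate_of_ne C hki]
      exact hyS k (Finset.mem_of_mem_insert_of_ne hk hki)
  · rw [Finset.mem_insert, not_or] at hk
    rw [Config.step_pstate_of_ne C hk.1, h.pstate_of_notMem k hk.2]
  · rw [hoval, Finset.card_insert_of_notMem hi]

lemma exists_step (h : OneShotInv input C x S) (hN : N ≤ n) (i : Fin N) :
    ∃ y, OneShotInv input (C.step i) y (insert i S) := by
  by_cases hi : i ∈ S
  · exact ⟨x, by rwa [h.step_of_mem hi, Finset.insert_eq_of_mem hi]⟩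
  · have hcard : S.card < N := by simpa using Finset.card_lt_univ_of_notMem hi
    exact h.step_of_notMem hi (hcard.trans_le hN)

lemma exists_runs (h : OneShotInv input C x S) (hN : N ≤ n) (l : List (Fin N)) :
    ∃ y S', OneShotInv input (C.runs l) y S' := by
  induction l generalizing C x S with
  | nil => exact ⟨x, S, h⟩
  | cons i _ ih =>
    obtain ⟨_, h'⟩ := h.exists_step hN i
    exact ih h'

lemma decides_iff (h : OneShotInv input C x S) {i : Fin N} {v : Bool} :
    C.Decides i v ↔ i ∈ S ∧ v = x := by
  by_cases hi : i ∈ S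
  · simp [Config.Decides, h.pstate_of_mem i hi, oneShot, hi, eq_comm]
  · simp [Config.Decides, h.pstate_of_notMem i hi, oneShot, hi]

end OneShotInv

lemma oneShot_solvesWFConsensus (n' : ℕ) (hn : 2 ≤ n) (hN : N ≤ n) :
    SolvesWFConsensus (oneShot N n n' hn) := by
  have hinv (input : Fin N → Bool) (l : List (Fin N)) :
      ∃ x S, OneShotInv input ((initConfig (oneShot N n n' hn) input).runs l) x S :=
    (oneShotInv_initConfig input false).exists_runs hN l
  refine ⟨agreementCF_iff.2 fun input l i j v w hv hw => ?_,
    validityCF_iff.2 fun input l i v hv => ?_, waitFree_iff.2 fun input f i hf => ?_⟩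
  · obtain ⟨x, S, h⟩ := hinv input l
    exact (h.decides_iff.1 hv).2.trans (h.decides_iff.1 hw).2.symm
  · obtain ⟨x, S, h⟩ := hinv input l
    obtain ⟨hi, rfl⟩ := h.decides_iff.1 hv
    exact h.exists_input_eq ⟨i, hi⟩
  · obtain ⟨k, rfl⟩ := hf.exists
    obtain ⟨x, S, h⟩ := hinv input ((List.range k).map f)
    obtain ⟨y, h'⟩ := h.exists_step hN (f k)
    refine ⟨k + 1, y, ?_⟩
    rw [Config.runs_map_range_succ, h'.decides_iff]
    exact ⟨Finset.mem_insert_self _ _, rfl⟩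

end OneShot

end RecoverableConsensus

open RecoverableConsensus in
theorem TType_consensus_number_general (n n' N : ℕ) (hn : 2 ≤ n) :
    (∃ A : Algorithm N, UsesTypeAndRegisters A (TType n n' hn) ∧ SolvesWFConsensus A) ↔
      N ≤ n := by
  constructor
  · rintro ⟨A, hTypes, hA⟩
    by_contra! hN
    obtain ⟨O, hO⟩ := exists_discerning_of_solvesWFConsensus (by omega) hA
    rcases hTypes O with hT | ⟨V, hV⟩
    · exact TType.not_discerning hn hN (hT ▸ hO)
    · exact not_discerning_registerType V (hV ▸ hO)
  · exact fun hN => ⟨oneShot N n n' hn, fun _ => .inl rfl, oneShot_solvesWFConsensus n' hn hN⟩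

open RecoverableConsensus in
/-- For all integers `n > n' ≥ 1`, the type `𝒯_{n,n'}` has consensus
number exactly `n`: there is a wait-free binary consensus algorithm for `n` processes using
objects of type `𝒯_{n,n'}` together with registers, but no such algorithm for `n+1`
processes. -/
theorem TType_consensus_number
    (n n' : ℕ) (h1 : 1 ≤ n') (h2 : n' < n) (hn : 2 ≤ n) :
    (∃ A : Algorithm n, UsesTypeAndRegisters A (TType n n' hn) ∧ SolvesWFConsensus A) ∧
    ¬ (∃ A : Algorithm (n + 1),
        UsesTypeAndRegisters A (TType n n' hn) ∧ SolvesWFConsensus A) := by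
  refine ⟨(TType_consensus_number_general n n' n hn).2 le_rfl, fun h => ?_⟩
  exact n.lt_irrefl ((TType_consensus_number_general n n' (n + 1) hn).1 h)
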